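/- Let X ∈ ℝ^{N×D} with rows x₁ᵀ, …, x_Nᵀ have singular value decomposition X = U D Vᵀ (UᵀU = I, V orthogonal, D diagonal with positive diagonal entries), and let t ∈ ℝᴺ. For λ ∈ ℝ define the training loss L_T(λ, (Q, s)) = Σᵢ₌₁ᴺ (sᵀQxᵢ − tᵢ)² + exp(λ)·‖Qᵀs‖² on pairs (Q, s) ∈ ℝ^{D×D} × ℝᴰ. Set Q₀ = Vᵀ, s₀ = D⁻¹Uᵀt, v = −𝟙 ∈ ℝᴰ, cᵢ = 2·ln(dᵢ), Q*(λ) = diag(σ(λv + c))·Q₀ and s*(λ) = s₀, where σ is the logistic sigmoid applied entrywise. Then for every λ ∈ ℝ, the pair (Q*(λ), s*(λ)) is a global minimizer of L_T(λ, ·) over ℝ^{D×D} × ℝᴰ. -/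

import Mathlib

/-!
In the rotated coordinates `w = Vᵀ(Qᵀs)` the loss decouples: since `UᵀU = 1` and `V` is orthogonal,
it equals `‖t‖² + ∑ⱼ ((dⱼ² + exp λ) wⱼ² - 2 dⱼ (Uᵀt)ⱼ wⱼ)` (`twoLayerLoss_svd`). Each summand is a
convex parabola with vertex `dⱼ (Uᵀt)ⱼ / (dⱼ² + exp λ)`. Because
`σ(2 log dⱼ - λ) = dⱼ² / (dⱼ² + exp λ)` (`logisticSigmoid_gate`), the gated pair has exactly this
vertex as its `j`-th coordinate, so it minimizes every summand at once.
-/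

open Matrix

/-- The logistic sigmoid `σ(z) = 1/(1 + exp(−z))`. -/
noncomputable def logisticSigmoid (z : ℝ) : ℝ := 1 / (1 + Real.exp (-z))

/-- The training loss of the two-layer linear network `y(x; (Q,s)) = sᵀQx` with an
`L₂` penalty (weight `exp λ`) on the input–output Jacobian `Qᵀs`:
`L_T(λ, (Q,s)) = Σᵢ (sᵀQxᵢ − tᵢ)² + exp(λ)·‖Qᵀs‖²`, where `xᵢᵀ` are the rows of `X`. -/
noncomputable def twoLayerLoss {N D : ℕ} (X : Matrix (Fin N) (Fin D) ℝ) (t : Fin N → ℝ)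
    (lam : ℝ) (Q : Matrix (Fin D) (Fin D) ℝ) (s : Fin D → ℝ) : ℝ :=
  (∑ i, (s ⬝ᵥ Q.mulVec (fun j => X i j) - t i) ^ 2)
    + Real.exp lam * ∑ j, (Qᵀ.mulVec s) j ^ 2

/-- The sigmoid gate is the ridge shrinkage factor of the singular value `x`. -/
lemma logisticSigmoid_gate (lam x : ℝ) (hx : 0 < x) :
    logisticSigmoid (lam * (-1) + 2 * Real.log x) = x ^ 2 / (x ^ 2 + Real.exp lam) := by
  have h : Real.exp (-(lam * (-1) + 2 * Real.log x)) = Real.exp lam / x ^ 2 := by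
    rw [show -(lam * (-1) + 2 * Real.log x) = lam - (Real.log x + Real.log x) by ring,
      Real.exp_sub, Real.exp_add, Real.exp_log hx, sq]
  have := Real.exp_pos lam
  rw [logisticSigmoid, h]
  field_simp

/-- The loss as a sum of one-variable parabolas in the coordinates `w = Vᵀ(Qᵀs)`. -/
lemma twoLayerLoss_svd {N D : ℕ} (U : Matrix (Fin N) (Fin D) ℝ) (V : Matrix (Fin D) (Fin D) ℝ)
    (d : Fin D → ℝ) (hU : Uᵀ * U = 1) (hV₂ : V * Vᵀ = 1) (t : Fin N → ℝ) (lam : ℝ)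
    (Q : Matrix (Fin D) (Fin D) ℝ) (s w : Fin D → ℝ) (hw : w = Vᵀ *ᵥ (Qᵀ *ᵥ s)) :
    twoLayerLoss (U * diagonal d * Vᵀ) t lam Q s =
      t ⬝ᵥ t + ∑ j, ((d j ^ 2 + Real.exp lam) * w j ^ 2 - 2 * d j * (Uᵀ *ᵥ t) j * w j) := by
  have hpen : ∑ j, (Qᵀ *ᵥ s) j ^ 2 = ∑ j, w j ^ 2 := by
    have h : w ⬝ᵥ w = (Qᵀ *ᵥ s) ⬝ᵥ (Qᵀ *ᵥ s) := by
      rw [hw, dotProduct_mulVec, vecMul_transpose, mulVec_mulVec, hV₂, one_mulVec]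
    simpa [dotProduct, sq] using h.symm
  have hpred : ∀ i, s ⬝ᵥ Q *ᵥ (fun j => (U * diagonal d * Vᵀ) i j) =
      (U *ᵥ (diagonal d *ᵥ w)) i := by
    intro i
    rw [dotProduct_mulVec, ← mulVec_transpose, dotProduct_comm, hw, mulVec_mulVec, mulVec_mulVec]
    rfl
  have hfit : ∑ i, (s ⬝ᵥ Q *ᵥ (fun j => (U * diagonal d * Vᵀ) i j) - t i) ^ 2 =
      (diagonal d *ᵥ w) ⬝ᵥ (diagonal d *ᵥ w) - 2 * ((Uᵀ *ᵥ t) ⬝ᵥ (diagonal d *ᵥ w))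
        + t ⬝ᵥ t := by
    have h₁ : (U *ᵥ (diagonal d *ᵥ w)) ⬝ᵥ (U *ᵥ (diagonal d *ᵥ w)) =
        (diagonal d *ᵥ w) ⬝ᵥ (diagonal d *ᵥ w) := by
      rw [dotProduct_mulVec, ← mulVec_transpose, mulVec_mulVec, hU, one_mulVec]
    have h₂ : t ⬝ᵥ (U *ᵥ (diagonal d *ᵥ w)) = (Uᵀ *ᵥ t) ⬝ᵥ (diagonal d *ᵥ w) := by
      rw [dotProduct_mulVec, ← mulVec_transpose]
    rw [← h₁, ← h₂]
    simp only [hpred]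
    simp only [dotProduct, Finset.mul_sum, ← Finset.sum_sub_distrib,
      ← Finset.sum_add_distrib]
    exact Finset.sum_congr rfl fun i _ => by ring
  rw [twoLayerLoss, hfit, hpen, add_comm _ (t ⬝ᵥ t), add_assoc]
  congr 1
  simp only [dotProduct, mulVec_diagonal, Finset.mul_sum, ← Finset.sum_sub_distrib,
    ← Finset.sum_add_distrib]
  exact Finset.sum_congr rfl fun j _ => by ring

/-- Let `X = U D Vᵀ` be an SVD (`UᵀU = I`, `V` orthogonal, `D = diag(d)` with positive
entries) and `t ∈ ℝᴺ`. With `Q₀ = Vᵀ`, `s₀ = D⁻¹Uᵀt`, `v = −𝟙`, `cᵢ = 2 ln dᵢ`,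
`Q*(λ) = diag(σ(λv + c))·Q₀`, `s*(λ) = s₀`, the pair `(Q*(λ), s*(λ))` globally minimizes
`L_T(λ, ·)` for every `λ`. -/
theorem sigmoidal_gating_global_min {N D : ℕ}
    (X U : Matrix (Fin N) (Fin D) ℝ) (V : Matrix (Fin D) (Fin D) ℝ) (d : Fin D → ℝ)
    (hX : X = U * Matrix.diagonal d * Vᵀ)
    (hU : Uᵀ * U = 1) (hV₁ : Vᵀ * V = 1) (hV₂ : V * Vᵀ = 1)
    (hd_pos : ∀ i, 0 < d i)
    (t : Fin N → ℝ)
    (Q₀ : Matrix (Fin D) (Fin D) ℝ) (hQ₀ : Q₀ = Vᵀ)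
    (s₀ : Fin D → ℝ) (hs₀ : s₀ = (Matrix.diagonal d)⁻¹.mulVec (Uᵀ.mulVec t))
    (v : Fin D → ℝ) (hv : v = fun _ => (-1 : ℝ))
    (c : Fin D → ℝ) (hc : c = fun i => 2 * Real.log (d i))
    (Qstar : ℝ → Matrix (Fin D) (Fin D) ℝ)
    (hQstar : Qstar = fun lam =>
      Matrix.diagonal (fun i => logisticSigmoid (lam * v i + c i)) * Q₀)
    (sstar : ℝ → Fin D → ℝ) (hsstar : sstar = fun _ => s₀) :
    ∀ lam : ℝ, ∀ (Q : Matrix (Fin D) (Fin D) ℝ) (s : Fin D → ℝ),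
      twoLayerLoss X t lam (Qstar lam) (sstar lam) ≤ twoLayerLoss X t lam Q s := by
  intro lam Q s
  have hb : ∀ j, s₀ j = (Uᵀ *ᵥ t) j / d j := by
    have h : (diagonal d)⁻¹ = diagonal (fun j => (d j)⁻¹) := by
      refine inv_eq_right_inv ?_
      rw [diagonal_mul_diagonal, ← diagonal_one]
      congr 1
      ext j
      exact mul_inv_cancel₀ (hd_pos j).ne'
    intro j
    rw [hs₀, h, mulVec_diagonal]
    ring
  have hstar : (fun j => d j * (Uᵀ *ᵥ t) j / (d j ^ 2 + Real.exp lam)) =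
      Vᵀ *ᵥ ((Qstar lam)ᵀ *ᵥ sstar lam) := by
    subst hQstar hsstar hQ₀ hv hc
    simp only [transpose_mul, diagonal_transpose, transpose_transpose]
    rw [mulVec_mulVec, ← Matrix.mul_assoc, hV₁, Matrix.one_mul]
    ext j
    have := hd_pos j
    have := Real.exp_pos lam
    rw [mulVec_diagonal, logisticSigmoid_gate _ _ (hd_pos j), hb]
    field_simp
  rw [hX, twoLayerLoss_svd U V d hU hV₂ t lam _ _ _ hstar,
    twoLayerLoss_svd U V d hU hV₂ t lam Q s _ rfl]
  refine add_le_add le_rfl (Finset.sum_le_sum fun j _ => ?_)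
  have hA : 0 < d j ^ 2 + Real.exp lam := by positivity
  generalize (Vᵀ *ᵥ (Qᵀ *ᵥ s)) j = w
  generalize (Uᵀ *ᵥ t) j = b
  -- Completing the square: the difference of the two sides is `A (w - d b / A)²`, `A = d² + exp λ`.
  have hsq : 0 ≤ (d j ^ 2 + Real.exp lam) * (w - d j * b / (d j ^ 2 + Real.exp lam)) ^ 2 := by
    positivity
  have hcancel : (d j ^ 2 + Real.exp lam) * (d j * b / (d j ^ 2 + Real.exp lam)) = d j * b := by
    field_simp
  generalize d j * b / (d j ^ 2 + Real.exp lam) = z at *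
  linear_combination hsq - 2 * (w - z) * hcancel
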